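/- For every odd integer m ≥ 3, the harmonic frame E_m satisfies β_{E_m} = (1 − 1/(m·sin(π/(2m))))^{−1/2}, and this equals the minimal condition number: β_{E_m} = min{β_A : A ∈ ℝ^{m×2}}. -/

import Mathlib

noncomputable section

open Real
open scoped RealInnerProductSpace ENNReal

/-- ℝ² as a Euclidean space. -/
abbrev E2 : Type := EuclideanSpace ℝ (Fin 2)

/-- The vector `(x, y)` in ℝ². -/
def vec2 (x y : ℝ) : E2 := (WithLp.equiv 2 (Fin 2 → ℝ)).symm ![x, y]

/-- The coordinates of a vector in ℝ². -/
def toFun2 (v : E2) : Fin 2 → ℝ := WithLp.equiv 2 (Fin 2 → ℝ) v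

/-- The phaseless measurement map `Φ_A(x) = (|⟨a_j, x⟩|)_j`. -/
def PhiMap {m : ℕ} (a : Fin m → E2) (x : E2) : EuclideanSpace ℝ (Fin m) :=
  (WithLp.equiv 2 (Fin m → ℝ)).symm fun j => |⟪a j, x⟫|

/-- The distance `dist(x,y) = min ‖x − y‖ ‖x + y‖` (real phase retrieval distance). -/
def pdist (x y : E2) : ℝ := min ‖x - y‖ ‖x + y‖

/-- The set of Lipschitz ratios of the phaseless measurement map. -/
def ratioSet {m : ℕ} (a : Fin m → E2) : Set ℝ :=
  {r | ∃ x y : E2, pdist x y ≠ 0 ∧ r = ‖PhiMap a x - PhiMap a y‖ / pdist x y}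

/-- The optimal lower Lipschitz constant `L_A`. -/
def lipL {m : ℕ} (a : Fin m → E2) : ℝ := sInf (ratioSet a)

/-- The optimal upper Lipschitz constant `U_A`. -/
def lipU {m : ℕ} (a : Fin m → E2) : ℝ := sSup (ratioSet a)

/-- The condition number `β_A = U_A / L_A`, with `β_A = +∞` when `L_A = 0`. -/
def condNum {m : ℕ} (a : Fin m → E2) : ℝ≥0∞ :=
  if lipL a = 0 then ⊤ else ENNReal.ofReal (lipU a / lipL a)

/-- An edge family: nonzero vectors with pairwise distinct directions summing to zero
(the edge vectors of a strictly convex polygon). -/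
def IsEdgeFamily {m : ℕ} (e : Fin m → E2) : Prop :=
  (∀ j, e j ≠ 0) ∧
  (∀ i j : Fin m, i ≠ j → ‖e i‖⁻¹ • e i ≠ ‖e j‖⁻¹ • e j) ∧
  ∑ j, e j = 0

/-- The diameter-to-perimeter ratio of the polygon with edge vectors `e`. -/
def rRatio {m : ℕ} (e : Fin m → E2) : ℝ :=
  sSup {s | ∃ u : E2, ‖u‖ = 1 ∧ s = ∑ j, |⟪e j, u⟫|} / (2 * ∑ j, ‖e j‖)

/-- An optimal edge family: minimizes `rRatio` among all edge families of size `m`. -/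
def IsOptimalEdgeFamily {m : ℕ} (e : Fin m → E2) : Prop :=
  IsEdgeFamily e ∧ ∀ e' : Fin m → E2, IsEdgeFamily e' → rRatio e ≤ rRatio e'

/-- The complex square map on ℝ² ≅ ℂ: `f(t·(cos φ, sin φ)) = t²·(cos 2φ, sin 2φ)`. -/
def csq (v : E2) : E2 :=
  vec2 (toFun2 v 0 ^ 2 - toFun2 v 1 ^ 2) (2 * toFun2 v 0 * toFun2 v 1)

/-- The harmonic frame `E_m`: the `j`-th row is `(cos((j−1)π/m), sin((j−1)π/m))`, `j = 1,…,m`. -/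
def harmonicFrame (m : ℕ) : Fin m → E2 :=
  fun j => vec2 (Real.cos ((j : ℕ) * π / m)) (Real.sin ((j : ℕ) * π / m))

/-!
Write `u = x - y`, `v = x + y`, `T = ∑ ‖a_j‖²` and `M = m sin (π / (2m))`. Then
`‖Φ_A x - Φ_A y‖² = ∑ min (⟨a_j, u⟩²) (⟨a_j, v⟩²)`, so `U_A²` is the upper frame bound and `L_A²` is
an infimum over pairs of unit vectors. The complex square linearises the squared inner products:
`2 ⟨a, u⟩² = ‖a‖² ‖u‖² + ⟨csq a, csq u⟩`.

Averaging over two orthogonal unit vectors gives `T / 2 ≤ U_A²`, while testing `L_A` on an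
orthogonal pair gives `∑ |⟨csq a_j, w⟩| ≤ T - 2 L_A²` for every unit `w`. The sums on the left are
the widths of the centrally symmetric polygon with edges `± csq a_j`, whose half-perimeter is `T`;
Reinhardt's inequality for such polygons yields `T ≤ (T - 2 L_A²) M`, and therefore
`L_A² ≤ (1 - 1 / M) U_A²`.

For the harmonic frame the vectors `csq a_j` are the `m`-th roots of unity. They sum to zero, so
`U² = T / 2 = m / 2`. For odd `m` the lines they span are equally spaced at angle `π / m`, so all
widths of their polygon are at most `1 / sin (π / (2m))` (compare the sum with `∫ |cos| = 2` over a
period), and the bound on `L` is attained.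
-/

/-- The unit vector `(cos θ, sin θ)` at angle `θ`, through which vectors of ℝ² are written in polar
form. -/
def unitVec (θ : ℝ) : E2 := vec2 (Real.cos θ) (Real.sin θ)

@[simp] lemma vec2_apply_zero (x y : ℝ) : vec2 x y 0 = x := rfl

@[simp] lemma vec2_apply_one (x y : ℝ) : vec2 x y 1 = y := rfl

lemma inner_eq_coord (u v : E2) : ⟪u, v⟫ = u 0 * v 0 + u 1 * v 1 := by
  simp [PiLp.inner_apply, Fin.sum_univ_two, mul_comm]

lemma inner_unitVec_unitVec (α β : ℝ) : ⟪unitVec α, unitVec β⟫ = Real.cos (α - β) := by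
  simp [inner_eq_coord, unitVec, Real.cos_sub]

@[simp] lemma norm_unitVec (θ : ℝ) : ‖unitVec θ‖ = 1 := by
  rw [norm_eq_sqrt_real_inner, inner_unitVec_unitVec, sub_self, Real.cos_zero, Real.sqrt_one]

lemma exists_eq_norm_smul_unitVec (u : E2) : ∃ θ, u = ‖u‖ • unitVec θ := by
  have hu : ‖u‖ = ‖(⟨u 0, u 1⟩ : ℂ)‖ := by
    simp [EuclideanSpace.norm_eq, Complex.norm_def, Complex.normSq_apply, Fin.sum_univ_two, sq]
  refine ⟨Complex.arg ⟨u 0, u 1⟩, ?_⟩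
  ext i
  fin_cases i
  · simp [unitVec, hu, Complex.norm_mul_cos_arg]
  · simp [unitVec, hu, Complex.norm_mul_sin_arg]

lemma inner_sq_eq_csq (u v : E2) :
    ⟪u, v⟫ ^ 2 = (‖u‖ ^ 2 * ‖v‖ ^ 2 + ⟪csq u, csq v⟫) / 2 := by
  rw [← real_inner_self_eq_norm_sq, ← real_inner_self_eq_norm_sq]
  simp only [inner_eq_coord, csq, vec2_apply_zero, vec2_apply_one, toFun2, WithLp.equiv_apply]
  ring

lemma norm_csq (u : E2) : ‖csq u‖ = ‖u‖ ^ 2 := by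
  have h := inner_sq_eq_csq u u
  simp only [real_inner_self_eq_norm_sq] at h
  exact (pow_left_inj₀ (norm_nonneg _) (sq_nonneg _) two_ne_zero).1 (by linarith)

lemma csq_unitVec (θ : ℝ) : csq (unitVec θ) = unitVec (2 * θ) := by
  rw [unitVec, unitVec, Real.cos_two_mul', Real.sin_two_mul, mul_right_comm]
  rfl

lemma csq_unitVec_add_pi_div_two (θ : ℝ) :
    csq (unitVec (θ + π / 2)) = -csq (unitVec θ) := by
  rw [csq_unitVec, csq_unitVec, show 2 * (θ + π / 2) = 2 * θ + π by ring]
  ext i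
  fin_cases i <;> simp [unitVec]

section ReinhardtInequality

variable {m : ℕ} {θ : ℕ → ℝ}

lemma sin_half_gap_nonneg (hθ : Monotone θ) (hend : θ m = θ 0 + π) {k : ℕ} (hk : k < m) :
    0 ≤ Real.sin ((θ (k + 1) - θ k) / 2) := by
  have hgap := hθ k.le_succ
  have hfirst := hθ k.zero_le
  have hlast := hθ hk
  exact Real.sin_nonneg_of_nonneg_of_le_pi (by linarith) (by linarith)

lemma sum_sin_half_gap_le (hm : m ≠ 0) (hθ : Monotone θ) (hend : θ m = θ 0 + π) :
    ∑ k ∈ Finset.range m, Real.sin ((θ (k + 1) - θ k) / 2) ≤ m * Real.sin (π / (2 * m)) := by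
  have hm' : (0 : ℝ) < m := by positivity
  have hmem : ∀ k ∈ Finset.range m, (θ (k + 1) - θ k) / 2 ∈ Set.Icc 0 π := fun k hk => by
    have hgap := hθ k.le_succ
    have hfirst := hθ k.zero_le
    have hlast := hθ (Finset.mem_range.1 hk)
    constructor <;> linarith
  have hjensen := strictConcaveOn_sin_Icc.concaveOn.le_map_sum (w := fun _ => (m : ℝ)⁻¹)
    (fun _ _ => by positivity) (by simp [hm]) hmem
  simp only [smul_eq_mul, ← Finset.mul_sum, ← Finset.sum_div, Finset.sum_range_sub, hend,
    add_sub_cancel_left] at hjensen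
  rwa [inv_mul_le_iff₀ hm', inv_mul_eq_div, div_div] at hjensen

lemma dist_add_dist_le_range_sum_dist {α : Type*} [PseudoMetricSpace α] (f : ℕ → α) {j : ℕ}
    (hj : j ≤ m) :
    dist (f 0) (f j) + dist (f j) (f m) ≤ ∑ k ∈ Finset.range m, dist (f k) (f (k + 1)) := by
  rw [Finset.range_eq_Ico, ← Finset.sum_Ico_consecutive _ j.zero_le hj]
  exact add_le_add (dist_le_Ico_sum_dist f j.zero_le) (dist_le_Ico_sum_dist f hj)

/-- Along `θ 0, …, θ m` the function `cos (· - θ j)` climbs to `1` at `θ j` and ends at minus its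
initial value, so its variation is at least `2`; the right-hand side is half of that variation. -/
lemma one_le_sum_sin_half_gap_mul (hθ : Monotone θ) (hend : θ m = θ 0 + π) {j : ℕ} (hj : j ≤ m) :
    1 ≤ ∑ k ∈ Finset.range m, Real.sin ((θ (k + 1) - θ k) / 2) *
      |Real.sin (θ j - (θ k + θ (k + 1)) / 2)| := by
  set f : ℕ → ℝ := fun k => Real.cos (θ k - θ j) with hf
  have hvar := dist_add_dist_le_range_sum_dist f hj
  simp only [Real.dist_eq] at hvar
  have hfj : f j = 1 := by simp [hf]
  have hfm : f m = -f 0 := by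
    simp only [hf, hend, ← Real.cos_add_pi]
    ring_nf
  have hstep : ∀ k ∈ Finset.range m, |f k - f (k + 1)| =
      2 * (Real.sin ((θ (k + 1) - θ k) / 2) * |Real.sin (θ j - (θ k + θ (k + 1)) / 2)|) := by
    intro k hk
    have hmid : (θ k - θ j + (θ (k + 1) - θ j)) / 2 = -(θ j - (θ k + θ (k + 1)) / 2) := by ring
    have hgap : (θ k - θ j - (θ (k + 1) - θ j)) / 2 = -((θ (k + 1) - θ k) / 2) := by ring
    rw [Real.cos_sub_cos, hmid, hgap, Real.sin_neg, Real.sin_neg, abs_mul, abs_mul, abs_neg,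
      abs_neg, abs_neg, abs_two,
      abs_of_nonneg (sin_half_gap_nonneg hθ hend (Finset.mem_range.1 hk))]
    ring
  rw [Finset.sum_congr rfl hstep, ← Finset.mul_sum, hfj, hfm] at hvar
  linarith [neg_abs_le (f 0 - 1), le_abs_self (1 - -f 0)]

lemma exists_monotone_eq_add_int_mul_pi (hm : m ≠ 0) (γ : Fin m → ℝ) :
    ∃ θ : ℕ → ℝ, Monotone θ ∧ θ m = θ 0 + π ∧ ∀ j, ∃ k ≤ m, ∃ n : ℤ, γ j = θ k + n * π := by
  set t : Fin m → ℝ := fun j => toIcoMod pi_pos 0 (γ j)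
  set σ := Tuple.sort t
  have ht : ∀ j, t j ∈ Set.Ico 0 π := fun j => by
    simpa only [zero_add] using toIcoMod_mem_Ico pi_pos 0 (γ j)
  have hpos : 0 < m := Nat.pos_of_ne_zero hm
  refine ⟨fun k => if hk : k < m then t (σ ⟨k, hk⟩) else t (σ ⟨0, hpos⟩) + π, ?_, ?_, ?_⟩
  · intro k l hkl
    dsimp only
    split_ifs with hk hl hl
    · exact Tuple.monotone_sort t hkl
    · linarith [(ht (σ ⟨k, hk⟩)).2, (ht (σ ⟨0, hpos⟩)).1]
    · omega
    · rfl
  · simp [hpos]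
  · intro j
    refine ⟨σ.symm j, (σ.symm j).2.le, toIcoDiv pi_pos 0 (γ j), ?_⟩
    simp [t]

lemma abs_sin_add_int_mul_pi (x : ℝ) (n : ℤ) : |Real.sin (x + n * π)| = |Real.sin x| := by
  simp [Real.sin_add_int_mul_pi, abs_mul, abs_zpow]

lemma exists_weights_one_le_sum_mul_abs_sin (hm : m ≠ 0) (γ : Fin m → ℝ) :
    ∃ w ψ : ℕ → ℝ, (∀ k ∈ Finset.range m, 0 ≤ w k) ∧
      ∑ k ∈ Finset.range m, w k ≤ m * Real.sin (π / (2 * m)) ∧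
      ∀ j, 1 ≤ ∑ k ∈ Finset.range m, w k * |Real.sin (γ j - ψ k)| := by
  obtain ⟨θ, hθ, hend, hγ⟩ := exists_monotone_eq_add_int_mul_pi hm γ
  refine ⟨fun k => Real.sin ((θ (k + 1) - θ k) / 2), fun k => (θ k + θ (k + 1)) / 2,
    fun k hk => sin_half_gap_nonneg hθ hend (Finset.mem_range.1 hk),
    sum_sin_half_gap_le hm hθ hend, fun j => ?_⟩
  obtain ⟨i, hi, n, hn⟩ := hγ j
  simp only [hn, add_sub_right_comm, abs_sin_add_int_mul_pi]
  exact one_le_sum_sin_half_gap_mul hθ hend hi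

/-- If the `e j` sum to zero, they are the edges of a convex `m`-gon, `∑ |⟨e j, w⟩|` is twice one of
its widths, and this is Reinhardt's inequality `perimeter ≤ 2 m sin (π / (2m)) · diameter`. -/
lemma sum_norm_le_of_sum_abs_inner_le (hm : m ≠ 0) (e : Fin m → E2) {D : ℝ}
    (hD : ∀ w : E2, ‖w‖ = 1 → ∑ j, |⟪e j, w⟫| ≤ D) :
    ∑ j, ‖e j‖ ≤ D * (m * Real.sin (π / (2 * m))) := by
  choose γ hγ using fun j => exists_eq_norm_smul_unitVec (e j)
  obtain ⟨w, ψ, hw, hsum, hone⟩ := exists_weights_one_le_sum_mul_abs_sin hm γ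
  have hD₀ : 0 ≤ D :=
    (Finset.sum_nonneg fun _ _ => abs_nonneg _).trans (hD (unitVec 0) (norm_unitVec 0))
  have hinner : ∀ j k, |⟪e j, unitVec (ψ k + π / 2)⟫| = ‖e j‖ * |Real.sin (γ j - ψ k)| := by
    intro j k
    conv_lhs => rw [hγ j]
    rw [real_inner_smul_left, inner_unitVec_unitVec, ← sub_sub, Real.cos_sub_pi_div_two, abs_mul,
      abs_norm]
  calc ∑ j, ‖e j‖
      ≤ ∑ j, ‖e j‖ * ∑ k ∈ Finset.range m, w k * |Real.sin (γ j - ψ k)| :=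
        Finset.sum_le_sum fun j _ => le_mul_of_one_le_right (norm_nonneg _) (hone j)
    _ = ∑ k ∈ Finset.range m, w k * ∑ j, |⟪e j, unitVec (ψ k + π / 2)⟫| := by
        simp only [hinner, Finset.mul_sum, mul_left_comm]
        exact Finset.sum_comm
    _ ≤ ∑ k ∈ Finset.range m, w k * D :=
        Finset.sum_le_sum fun k hk => mul_le_mul_of_nonneg_left (hD _ (norm_unitVec _)) (hw k hk)
    _ ≤ D * (m * Real.sin (π / (2 * m))) := by
        rw [← Finset.sum_mul, mul_comm]
        exact mul_le_mul_of_nonneg_left hsum hD₀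

end ReinhardtInequality

section ReinhardtConstant

variable {m : ℕ}

lemma one_le_mul_sin (hm : m ≠ 0) : 1 ≤ m * Real.sin (π / (2 * m)) := by
  have hm' : (1 : ℝ) ≤ m := Nat.one_le_cast.2 (Nat.one_le_iff_ne_zero.2 hm)
  have hle : π / (2 * m) ≤ π / 2 := by gcongr; linarith
  calc (1 : ℝ) = m * (2 / π * (π / (2 * m))) := by field_simp
    _ ≤ m * Real.sin (π / (2 * m)) := by
      gcongr
      exact Real.mul_le_sin (by positivity) hle

lemma sin_pi_div_two_mul_pos (hm : m ≠ 0) : 0 < Real.sin (π / (2 * m)) :=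
  pos_of_mul_pos_right (one_pos.trans_le (one_le_mul_sin hm)) (Nat.cast_nonneg m)

lemma one_div_mul_sin_le_one (hm : m ≠ 0) : 1 / (m * Real.sin (π / (2 * m))) ≤ 1 :=
  (div_le_one (one_pos.trans_le (one_le_mul_sin hm))).2 (one_le_mul_sin hm)

end ReinhardtConstant

section LipschitzConstants

variable {m : ℕ} (a : Fin m → E2)

lemma sq_abs_sub_abs {R : Type*} [CommRing R] [LinearOrder R] [IsStrictOrderedRing R] (p q : R) :
    (|p| - |q|) ^ 2 = min ((p - q) ^ 2) ((p + q) ^ 2) := by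
  have hexp : (|p| - |q|) ^ 2 = p ^ 2 + q ^ 2 - 2 * |p * q| := by
    rw [sub_sq, sq_abs, sq_abs, abs_mul]
    ring
  rcases le_total 0 (p * q) with h | h
  · rw [hexp, abs_of_nonneg h, min_eq_left (by linarith)]
    ring
  · rw [hexp, abs_of_nonpos h, min_eq_right (by linarith)]
    ring

lemma norm_PhiMap_sub_sq (x y : E2) :
    ‖PhiMap a x - PhiMap a y‖ ^ 2 = ∑ j, min (⟪a j, x - y⟫ ^ 2) (⟪a j, x + y⟫ ^ 2) := by
  simp [EuclideanSpace.norm_sq_eq, PhiMap, sq_abs_sub_abs, inner_sub_right, inner_add_right]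

lemma pdist_nonneg (x y : E2) : 0 ≤ pdist x y := le_min (norm_nonneg _) (norm_nonneg _)

lemma nonneg_of_mem_ratioSet {r : ℝ} (hr : r ∈ ratioSet a) : 0 ≤ r := by
  obtain ⟨x, y, -, rfl⟩ := hr
  exact div_nonneg (norm_nonneg _) (pdist_nonneg x y)

lemma bddBelow_ratioSet : BddBelow (ratioSet a) :=
  ⟨0, fun _ => nonneg_of_mem_ratioSet a⟩

lemma lipL_nonneg : 0 ≤ lipL a := Real.sInf_nonneg fun _ => nonneg_of_mem_ratioSet a

lemma lipU_nonneg : 0 ≤ lipU a := Real.sSup_nonneg fun _ => nonneg_of_mem_ratioSet a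

lemma sqrt_sum_min_mem_ratioSet {u v : E2} (hu : ‖u‖ = 1) (hv : ‖v‖ = 1) :
    √(∑ j, min (⟪a j, u⟫ ^ 2) (⟪a j, v⟫ ^ 2)) ∈ ratioSet a := by
  set x : E2 := (1 / 2 : ℝ) • (u + v) with hx
  set y : E2 := (1 / 2 : ℝ) • (v - u) with hy
  have hsub : x - y = u := by rw [hx, hy]; module
  have hadd : x + y = v := by rw [hx, hy]; module
  have hdist : pdist x y = 1 := by rw [pdist, hsub, hadd, hu, hv, min_self]
  refine ⟨x, y, hdist ▸ one_ne_zero, ?_⟩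
  rw [hdist, div_one, ← hsub, ← hadd, ← norm_PhiMap_sub_sq, Real.sqrt_sq (norm_nonneg _)]

lemma ratioSet_nonempty : (ratioSet a).Nonempty :=
  ⟨_, sqrt_sum_min_mem_ratioSet a (norm_unitVec 0) (norm_unitVec 0)⟩

lemma le_sqrt_of_mem_ratioSet {c : ℝ} (hc : ∀ u, ∑ j, ⟪a j, u⟫ ^ 2 ≤ c * ‖u‖ ^ 2) {r : ℝ}
    (hr : r ∈ ratioSet a) : r ≤ √c := by
  obtain ⟨x, y, hxy, rfl⟩ := hr
  have hpos : 0 < pdist x y := (pdist_nonneg x y).lt_of_ne' hxy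
  apply Real.le_sqrt_of_sq_le
  rw [div_pow, div_le_iff₀ (by positivity), norm_PhiMap_sub_sq]
  rcases min_choice ‖x - y‖ ‖x + y‖ with h | h <;> rw [pdist, h]
  · exact (Finset.sum_le_sum fun _ _ => min_le_left _ _).trans (hc _)
  · exact (Finset.sum_le_sum fun _ _ => min_le_right _ _).trans (hc _)

lemma lipU_sq_le_of_frame_bound {c : ℝ} (hc : ∀ u, ∑ j, ⟪a j, u⟫ ^ 2 ≤ c * ‖u‖ ^ 2) :
    lipU a ^ 2 ≤ c := by
  have hc₀ : 0 ≤ c := by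
    simpa using (Finset.sum_nonneg fun _ _ => sq_nonneg _).trans (hc (unitVec 0))
  exact (Real.le_sqrt (lipU_nonneg a) hc₀).1
    (csSup_le (ratioSet_nonempty a) fun _ => le_sqrt_of_mem_ratioSet a hc)

lemma bddAbove_ratioSet : BddAbove (ratioSet a) := by
  refine ⟨√(∑ j, ‖a j‖ ^ 2), fun r => le_sqrt_of_mem_ratioSet a fun u => ?_⟩
  rw [Finset.sum_mul]
  refine Finset.sum_le_sum fun j _ => ?_
  rw [← mul_pow, ← sq_abs]
  gcongr
  exact abs_real_inner_le_norm _ _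

lemma sum_inner_sq_le_lipU_sq {u : E2} (hu : ‖u‖ = 1) : ∑ j, ⟪a j, u⟫ ^ 2 ≤ lipU a ^ 2 := by
  have hmem := sqrt_sum_min_mem_ratioSet a hu hu
  simp only [min_self] at hmem
  exact (Real.sqrt_le_left (lipU_nonneg a)).1 (le_csSup (bddAbove_ratioSet a) hmem)

lemma lipL_sq_le_sum_min {u v : E2} (hu : ‖u‖ = 1) (hv : ‖v‖ = 1) :
    lipL a ^ 2 ≤ ∑ j, min (⟪a j, u⟫ ^ 2) (⟪a j, v⟫ ^ 2) := by
  have hnonneg : 0 ≤ ∑ j, min (⟪a j, u⟫ ^ 2) (⟪a j, v⟫ ^ 2) :=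
    Finset.sum_nonneg fun _ _ => le_min (sq_nonneg _) (sq_nonneg _)
  exact (Real.le_sqrt (lipL_nonneg a) hnonneg).1
    (csInf_le (bddBelow_ratioSet a) (sqrt_sum_min_mem_ratioSet a hu hv))

lemma le_lipL_sq {c : ℝ} (hc : ∀ u v : E2, ‖u‖ = 1 → ‖v‖ = 1 →
    c ≤ ∑ j, min (⟪a j, u⟫ ^ 2) (⟪a j, v⟫ ^ 2)) : c ≤ lipL a ^ 2 := by
  refine (Real.sqrt_le_left (lipL_nonneg a)).1 (le_csInf (ratioSet_nonempty a) ?_)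
  rintro r ⟨x, y, hxy, rfl⟩
  have hpos : 0 < pdist x y := (pdist_nonneg x y).lt_of_ne' hxy
  obtain ⟨μ, hμ⟩ := exists_eq_norm_smul_unitVec (x - y)
  obtain ⟨ν, hν⟩ := exists_eq_norm_smul_unitVec (x + y)
  rw [Real.sqrt_le_left (by positivity), div_pow, le_div_iff₀ (by positivity), norm_PhiMap_sub_sq]
  refine (mul_le_mul_of_nonneg_right (hc _ _ (norm_unitVec μ) (norm_unitVec ν))
    (sq_nonneg _)).trans ?_
  rw [Finset.sum_mul, hμ, hν]
  refine Finset.sum_le_sum fun j _ => ?_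
  rw [real_inner_smul_right, real_inner_smul_right, mul_pow, mul_pow, mul_comm,
    mul_min_of_nonneg _ _ (sq_nonneg _)]
  gcongr
  · exact min_le_left _ _
  · exact min_le_right _ _

lemma condNum_eq : condNum a = ENNReal.ofReal (lipL a ^ 2 / lipU a ^ 2) ^ (-(1 / 2) : ℝ) := by
  obtain ⟨r, hr⟩ := ratioSet_nonempty a
  have hLU : lipL a ≤ lipU a :=
    (csInf_le (bddBelow_ratioSet a) hr).trans (le_csSup (bddAbove_ratioSet a) hr)
  rcases (lipL_nonneg a).eq_or_lt with hL | hL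
  · simp [condNum, ← hL]
  · have hU : 0 < lipU a := hL.trans_le hLU
    rw [condNum, if_neg hL.ne', ENNReal.ofReal_rpow_of_pos (by positivity), ← div_pow,
      Real.rpow_neg (by positivity), ← Real.sqrt_eq_rpow, Real.sqrt_sq (by positivity), inv_div]

lemma sum_inner_sq_eq_csq (u : E2) :
    ∑ j, ⟪a j, u⟫ ^ 2 = ((∑ j, ‖a j‖ ^ 2) * ‖u‖ ^ 2 + ⟪∑ j, csq (a j), csq u⟫) / 2 := by
  simp only [inner_sq_eq_csq, sum_inner, ← Finset.sum_div, Finset.sum_add_distrib, Finset.sum_mul]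

lemma sum_min_inner_sq_eq_csq {u v : E2} (hu : ‖u‖ = 1) (hv : ‖v‖ = 1) :
    ∑ j, min (⟪a j, u⟫ ^ 2) (⟪a j, v⟫ ^ 2) =
      (∑ j, ‖a j‖ ^ 2) / 2 + ⟪∑ j, csq (a j), csq u + csq v⟫ / 4 -
        (∑ j, |⟪csq (a j), csq u - csq v⟫|) / 4 := by
  have hmin (p q : ℝ) : min p q = (p + q) / 2 - |p - q| / 2 := by
    rw [min_def]
    split_ifs with h
    · rw [abs_of_nonpos (by linarith)]
      ring
    · rw [abs_of_nonneg (by linarith)]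
      ring
  simp only [sum_inner, Finset.sum_div, ← Finset.sum_add_distrib, ← Finset.sum_sub_distrib]
  refine Finset.sum_congr rfl fun j _ => ?_
  have hdiff : ⟪a j, u⟫ ^ 2 - ⟪a j, v⟫ ^ 2 = ⟪csq (a j), csq u - csq v⟫ / 2 := by
    rw [inner_sq_eq_csq, inner_sq_eq_csq, hu, hv, inner_sub_right]
    ring
  rw [hmin, hdiff, abs_div, abs_two, inner_sq_eq_csq, inner_sq_eq_csq, hu, hv, inner_add_right]
  ring

lemma half_sum_norm_sq_le_lipU_sq : (∑ j, ‖a j‖ ^ 2) / 2 ≤ lipU a ^ 2 := by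
  have h₁ := sum_inner_sq_le_lipU_sq a (norm_unitVec 0)
  have h₂ := sum_inner_sq_le_lipU_sq a (norm_unitVec (0 + π / 2))
  rw [sum_inner_sq_eq_csq, norm_unitVec] at h₁ h₂
  rw [csq_unitVec_add_pi_div_two, inner_neg_right] at h₂
  linarith

lemma sum_abs_inner_csq_le {w : E2} (hw : ‖w‖ = 1) :
    ∑ j, |⟪csq (a j), w⟫| ≤ ∑ j, ‖a j‖ ^ 2 - 2 * lipL a ^ 2 := by
  obtain ⟨ψ, hψ⟩ := exists_eq_norm_smul_unitVec w
  have hcsq : csq (unitVec (ψ / 2)) = w := by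
    rw [csq_unitVec, mul_div_cancel₀ _ two_ne_zero, hψ, hw, one_smul]
  have hL := lipL_sq_le_sum_min a (norm_unitVec (ψ / 2)) (norm_unitVec (ψ / 2 + π / 2))
  rw [sum_min_inner_sq_eq_csq a (norm_unitVec _) (norm_unitVec _), csq_unitVec_add_pi_div_two, hcsq,
    add_neg_cancel, inner_zero_right, sub_neg_eq_add, ← two_smul ℝ w] at hL
  simp only [real_inner_smul_right, abs_mul, abs_two, ← Finset.mul_sum] at hL
  linarith

lemma lipL_sq_le_mul_lipU_sq (hm : m ≠ 0) :
    lipL a ^ 2 ≤ (1 - 1 / (m * Real.sin (π / (2 * m)))) * lipU a ^ 2 := by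
  have hperim := sum_norm_le_of_sum_abs_inner_le hm (fun j => csq (a j)) fun _ =>
    sum_abs_inner_csq_le a
  simp only [norm_csq] at hperim
  set T := ∑ j, ‖a j‖ ^ 2
  set M := m * Real.sin (π / (2 * m))
  have hM : 0 < M := one_pos.trans_le (one_le_mul_sin hm)
  calc lipL a ^ 2 ≤ (1 - 1 / M) * (T / 2) := by
        have := (div_le_iff₀ hM).2 hperim
        rw [one_sub_mul, one_div_mul_eq_div, div_right_comm]
        linarith
    _ ≤ (1 - 1 / M) * lipU a ^ 2 :=
        mul_le_mul_of_nonneg_left (half_sum_norm_sq_le_lipU_sq a)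
          (sub_nonneg.2 (one_div_mul_sin_le_one hm))

lemma le_condNum (hm : m ≠ 0) :
    ENNReal.ofReal (1 - 1 / (m * Real.sin (π / (2 * m)))) ^ (-(1 / 2) : ℝ) ≤ condNum a := by
  rw [condNum_eq, ENNReal.rpow_neg, ENNReal.rpow_neg]
  gcongr
  exact div_le_of_le_mul₀ (sq_nonneg _) (sub_nonneg.2 (one_div_mul_sin_le_one hm))
    (lipL_sq_le_mul_lipU_sq a hm)

end LipschitzConstants

section HarmonicFrame

variable {m : ℕ}

lemma csq_harmonicFrame (j : Fin m) :
    csq (harmonicFrame m j) = unitVec (2 * ((j : ℕ) * π / m)) := csq_unitVec _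

lemma norm_harmonicFrame (j : Fin m) : ‖harmonicFrame m j‖ = 1 := norm_unitVec _

lemma sum_norm_harmonicFrame_sq : ∑ j, ‖harmonicFrame m j‖ ^ 2 = m := by
  simp [norm_harmonicFrame]

lemma sum_csq_harmonicFrame (hm : 1 < m) : ∑ j, csq (harmonicFrame m j) = 0 := by
  have hζ := (Complex.isPrimitiveRoot_exp m (by omega)).geom_sum_eq_zero hm
  have hpow (j : ℕ) : Complex.exp (2 * π * Complex.I / m) ^ j =
      Complex.exp ((2 * (j * π / m) : ℝ) * Complex.I) := by
    rw [← Complex.exp_nat_mul]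
    push_cast
    ring_nf
  simp only [hpow, Finset.sum_range] at hζ
  have hre := congrArg Complex.re hζ
  have him := congrArg Complex.im hζ
  simp only [Complex.re_sum, Complex.im_sum, Complex.exp_ofReal_mul_I_re,
    Complex.exp_ofReal_mul_I_im, Complex.zero_re, Complex.zero_im] at hre him
  ext i
  fin_cases i
  · simpa [csq_harmonicFrame, unitVec] using hre
  · simpa [csq_harmonicFrame, unitVec] using him

lemma integral_abs_cos_add_pi (x : ℝ) : ∫ t in x..(x + π), |Real.cos t| = 2 := by
  have hper : Function.Periodic (fun t => |Real.cos t|) π := fun t => by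
    simp [Real.cos_add_pi]
  calc ∫ t in x..(x + π), |Real.cos t|
      = ∫ t in -(π / 2)..(π / 2), |Real.cos t| := by
        rw [hper.intervalIntegral_add_eq x (-(π / 2)), neg_add_eq_sub, sub_half]
    _ = ∫ t in -(π / 2)..(π / 2), Real.cos t := by
        refine intervalIntegral.integral_congr fun t ht => ?_
        rw [Set.uIcc_of_le (by linarith [pi_pos])] at ht
        exact abs_of_nonneg (Real.cos_nonneg_of_mem_Icc ht)
    _ = 2 := by
        rw [integral_cos, Real.sin_neg, Real.sin_pi_div_two]
        norm_num

lemma two_mul_sin_mul_abs_cos_le_integral {h : ℝ} (hh : 0 ≤ h) (x : ℝ) :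
    2 * Real.sin h * |Real.cos x| ≤ ∫ t in (x - h)..(x + h), |Real.cos t| := by
  have hint : ∫ t in (x - h)..(x + h), Real.cos t = 2 * Real.sin h * Real.cos x := by
    rw [integral_cos, Real.sin_add, Real.sin_sub]
    ring
  calc 2 * Real.sin h * |Real.cos x| ≤ |2 * Real.sin h * Real.cos x| := by
        rw [abs_mul]
        gcongr
        exact le_abs_self _
    _ = |∫ t in (x - h)..(x + h), Real.cos t| := by rw [hint]
    _ ≤ ∫ t in (x - h)..(x + h), |Real.cos t| :=
        intervalIntegral.abs_integral_le_integral_abs (by linarith)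

lemma sum_abs_cos_sub_le (hm : m ≠ 0) (φ : ℝ) :
    ∑ k ∈ Finset.range m, |Real.cos (k * π / m - φ)| ≤ 1 / Real.sin (π / (2 * m)) := by
  set h := π / (2 * m) with hh
  have hmh : m * (2 * h) = π := by rw [hh]; field_simp
  set x : ℕ → ℝ := fun k => k * (2 * h) - φ - h with hx
  have hstep (k : ℕ) :
      2 * Real.sin h * |Real.cos (k * π / m - φ)| ≤ ∫ t in (x k)..(x (k + 1)), |Real.cos t| := by
    have hmid : k * π / m = k * (2 * h) := by rw [hh]; field_simp
    have hright : x (k + 1) = k * (2 * h) - φ + h := by simp only [hx]; push_cast; ring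
    rw [hmid, hright]
    exact two_mul_sin_mul_abs_cos_le_integral (by positivity) _
  have hend : x m = x 0 + π := by simp only [hx, hmh, Nat.cast_zero]; ring
  have hsum := Finset.sum_le_sum fun k (_ : k ∈ Finset.range m) => hstep k
  rw [← Finset.mul_sum, intervalIntegral.sum_integral_adjacent_intervals fun _ _ =>
    Real.continuous_cos.abs.intervalIntegrable _ _, hend, integral_abs_cos_add_pi] at hsum
  rw [le_div_iff₀ (sin_pi_div_two_mul_pos hm)]
  linarith

lemma sum_range_mul_of_periodic {M : Type*} [AddCommMonoid M] {f : ℕ → M} {c : ℕ}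
    (hm : m ≠ 0) (hf : Function.Periodic f m) (hc : m.Coprime c) :
    ∑ k ∈ Finset.range m, f (c * k) = ∑ k ∈ Finset.range m, f k := by
  have hmaps : Set.MapsTo (fun k => c * k % m) (Finset.range m) (Finset.range m) := fun k _ =>
    Finset.mem_coe.2 (Finset.mem_range.2 (Nat.mod_lt _ (Nat.pos_of_ne_zero hm)))
  have hinj : Set.InjOn (fun k => c * k % m) (Finset.range m) := fun k hk l hl hkl =>
    (Nat.ModEq.cancel_left_of_coprime hc hkl).eq_of_lt_of_lt (Finset.mem_range.1 hk)
      (Finset.mem_range.1 hl)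
  exact Finset.sum_nbij (fun k => c * k % m) hmaps hinj
    (Finset.surjOn_of_injOn_of_card_le _ hmaps hinj le_rfl) fun k _ => (hf.map_mod_nat _).symm

lemma sum_abs_inner_csq_harmonicFrame_le (hodd : Odd m) (w : E2) :
    ∑ j, |⟪csq (harmonicFrame m j), w⟫| ≤ ‖w‖ / Real.sin (π / (2 * m)) := by
  have hm : m ≠ 0 := hodd.pos.ne'
  obtain ⟨φ, hφ⟩ := exists_eq_norm_smul_unitVec w
  set f : ℕ → ℝ := fun k => |Real.cos (k * π / m - φ)| with hf
  have hper : Function.Periodic f m := fun k => by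
    have hshift : ((k + m : ℕ) : ℝ) * π / m - φ = k * π / m - φ + π := by
      push_cast
      field_simp
      ring
    simp only [hf, hshift, Real.cos_add_pi, abs_neg]
  have hterm (j : Fin m) : |⟪csq (harmonicFrame m j), w⟫| = ‖w‖ * f (2 * j) := by
    conv_lhs => rw [hφ]
    rw [csq_harmonicFrame, real_inner_smul_right, inner_unitVec_unitVec, abs_mul, abs_norm]
    simp only [hf]
    push_cast
    ring_nf
  calc ∑ j, |⟪csq (harmonicFrame m j), w⟫|
      = ‖w‖ * ∑ k ∈ Finset.range m, f (2 * k) := by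
        simp only [hterm, Finset.mul_sum, Finset.sum_range]
    _ = ‖w‖ * ∑ k ∈ Finset.range m, f k := by
        rw [sum_range_mul_of_periodic hm hper hodd.coprime_two_right]
    _ ≤ ‖w‖ * (1 / Real.sin (π / (2 * m))) := by
        gcongr
        exact sum_abs_cos_sub_le hm φ
    _ = ‖w‖ / Real.sin (π / (2 * m)) := mul_one_div _ _

lemma lipU_harmonicFrame_sq (hm : 1 < m) : lipU (harmonicFrame m) ^ 2 = m / 2 := by
  refine le_antisymm (lipU_sq_le_of_frame_bound _ fun u => ?_) ?_
  · rw [sum_inner_sq_eq_csq, sum_csq_harmonicFrame hm, sum_norm_harmonicFrame_sq, inner_zero_left]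
    linarith
  · simpa only [sum_norm_harmonicFrame_sq] using half_sum_norm_sq_le_lipU_sq (harmonicFrame m)

lemma le_lipL_harmonicFrame_sq (hm : 1 < m) (hodd : Odd m) :
    (1 - 1 / (m * Real.sin (π / (2 * m)))) * (m / 2) ≤ lipL (harmonicFrame m) ^ 2 := by
  have hs := sin_pi_div_two_mul_pos (Nat.ne_zero_of_lt hm)
  refine le_lipL_sq _ fun u v hu hv => ?_
  have hnorm : ‖csq u - csq v‖ ≤ 2 := by
    have := norm_sub_le (csq u) (csq v)
    rw [norm_csq, norm_csq, hu, hv] at this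
    linarith
  rw [sum_min_inner_sq_eq_csq _ hu hv, sum_csq_harmonicFrame hm, sum_norm_harmonicFrame_sq,
    inner_zero_left, zero_div, add_zero]
  have hwidth : ∑ j, |⟪csq (harmonicFrame m j), csq u - csq v⟫| ≤ 2 / Real.sin (π / (2 * m)) :=
    (sum_abs_inner_csq_harmonicFrame_le hodd _).trans (by gcongr)
  calc (1 - 1 / (m * Real.sin (π / (2 * m)))) * (m / 2)
      = m / 2 - 2 / Real.sin (π / (2 * m)) / 4 := by
        field_simp
        ring
    _ ≤ _ := by gcongr

lemma condNum_harmonicFrame (hm : 1 < m) (hodd : Odd m) :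
    condNum (harmonicFrame m) =
      ENNReal.ofReal (1 - 1 / (m * Real.sin (π / (2 * m)))) ^ (-(1 / 2) : ℝ) := by
  have hle := lipL_sq_le_mul_lipU_sq (harmonicFrame m) (Nat.ne_zero_of_lt hm)
  have hge := le_lipL_harmonicFrame_sq hm hodd
  have hm' : (m : ℝ) / 2 ≠ 0 := by positivity
  rw [lipU_harmonicFrame_sq hm] at hle
  rw [condNum_eq, lipU_harmonicFrame_sq hm, hle.antisymm hge, mul_div_cancel_right₀ _ hm']

end HarmonicFrame

/-- For every odd `m ≥ 3`, the harmonic frame `E_m` satisfies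
`β_{E_m} = (1 − 1/(m·sin(π/(2m))))^{−1/2}`, which is the minimal condition number. -/
theorem stmt9 {m : ℕ} (hm : 3 ≤ m) (hodd : Odd m) :
    condNum (harmonicFrame m) =
        ENNReal.ofReal (1 - 1 / (m * Real.sin (π / (2 * m)))) ^ (-(1 / 2) : ℝ) ∧
    condNum (harmonicFrame m) = ⨅ A : Fin m → E2, condNum A := by
  have hm₁ : 1 < m := by omega
  have hvalue := condNum_harmonicFrame hm₁ hodd
  refine ⟨hvalue, le_antisymm (le_iInf fun A => ?_) (iInf_le _ _)⟩
  rw [hvalue]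
  exact le_condNum A (Nat.ne_zero_of_lt hm₁)
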